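/- For every u ∈ Σ and every r ∈ (0, 1), one has H_{B \ B_r}(u) ≥ 0; equivalently, H_{B_r}(u) ≤ H(u), where H(u) = H_B(u). -/

import Mathlib

/-!
Write `v(s) = u(s, 0)` for the radial profile of `u`. Since `|v'(|x|)| ≤ ‖∇u(x)‖`, passing to
polar coordinates reduces the claim to `∫_r^R s (v'² - v²/(1-s²)²) ds ≥ 0`, where `R < 1` is
such that `v` vanishes on `[R, ∞)`.

In the variable `t = -log s` this is the one-dimensional Hardy inequality
`∫ v_t² ≥ ∫ v²/(4t²)` with `v = 0` at `t = 0` and a free end at `t = -log r`, combined with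
`4 t² ≤ 4 sinh² t`. Concretely, with `g(s) = -1/(2 log s)`, completing the square in
`s v'² + 2 g v v' + g² v²/s ≥ 0` gives `s (v'² - v²/(1-s²)²) ≥ -(g v²)'`
(`hardy_pointwise`), and integrating leaves the boundary term `g(r) v(r)² ≥ 0`
(`hardy_interval`). The comparison of `H_{B_r}` with `H` is additivity of the integrals.
-/

open MeasureTheory Real Filter

noncomputable section

/-- `ℝ²` as a Euclidean space. -/
abbrev E2 : Type := EuclideanSpace ℝ (Fin 2)

/-- The open unit disc in `ℝ²`. -/
def B2 : Set E2 := Metric.ball 0 1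

/-- `u ∈ C_c^∞(B)`: a smooth function with compact support contained in the open unit disc. -/
def IsTest (u : E2 → ℝ) : Prop :=
  ContDiff ℝ (⊤ : ℕ∞) u ∧ HasCompactSupport u ∧ tsupport u ⊆ B2

/-- `u ∈ Σ`: a smooth compactly supported function on the unit disc which is radially
symmetric and nonincreasing in the radius (encoded as: `‖x‖ ≤ ‖y‖ → u y ≤ u x`, which is
equivalent to radial symmetry together with monotonicity in `r`). -/
def IsSigma (u : E2 → ℝ) : Prop :=
  IsTest u ∧ ∀ x y : E2, ‖x‖ ≤ ‖y‖ → u y ≤ u x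

/-- The localized Hardy functional `H_Ω(u) = ∫_Ω |∇u|² − ∫_Ω u²/(1−|x|²)²`. -/
def HOn (Ω : Set E2) (u : E2 → ℝ) : ℝ :=
  (∫ x in Ω, ‖gradient u x‖ ^ 2) - ∫ x in Ω, (u x) ^ 2 / (1 - ‖x‖ ^ 2) ^ 2

/-- The Hardy functional `H(u) = H_B(u)`. -/
def H (u : E2 → ℝ) : ℝ := HOn B2 u

/-- The point `(r, 0) ∈ ℝ²`, used to evaluate a radial function at radius `r`. -/
def pt (r : ℝ) : E2 := EuclideanSpace.single 0 r

/-- The inequality `t ≤ sinh t` at `t = -log s`, squared. -/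
lemma log_sq_bound {s : ℝ} (h0 : 0 < s) (h1 : s < 1) :
    4 * s ^ 2 * (log s) ^ 2 ≤ (1 - s ^ 2) ^ 2 := by
  have hl : log s < 0 := Real.log_neg h0 h1
  have h := Real.self_le_sinh_iff.2 (neg_nonneg.2 hl.le)
  rw [Real.sinh_eq, neg_neg, Real.exp_log h0, Real.exp_neg, Real.exp_log h0] at h
  have h2 : 2 * s * (-log s) ≤ 1 - s ^ 2 := by
    have := mul_le_mul_of_nonneg_left h (by positivity : 0 ≤ 2 * s)
    have e : 2 * s * ((s⁻¹ - s) / 2) = 1 - s ^ 2 := by field_simp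
    linarith
  have h3 : 0 ≤ 2 * s * (-log s) := by
    have := neg_pos.2 hl
    positivity
  nlinarith

/-- Completion of the square: the left-hand side is the derivative at `s` of `v² / (2 log)`, for a
function `v` with value `a` and derivative `b` at `s`. -/
lemma hardy_pointwise {s : ℝ} (h0 : 0 < s) (h1 : s < 1) (a b : ℝ) :
    (2 * a * b * (2 * log s) - a ^ 2 * (2 * s⁻¹)) / (2 * log s) ^ 2
      ≤ s * (b ^ 2 - a ^ 2 / (1 - s ^ 2) ^ 2) := by
  have hl : log s < 0 := Real.log_neg h0 h1
  have hl' : log s ≠ 0 := hl.ne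
  have hb := log_sq_bound h0 h1
  have hp : 0 < 1 - s ^ 2 := by nlinarith
  have hL : 0 < 4 * s ^ 2 * (log s) ^ 2 := by positivity
  have h2 : a ^ 2 / (1 - s ^ 2) ^ 2 ≤ a ^ 2 / (4 * s ^ 2 * (log s) ^ 2) :=
    div_le_div_of_nonneg_left (sq_nonneg a) hL hb
  have h3 : s * (b ^ 2 - a ^ 2 / (4 * s ^ 2 * (log s) ^ 2)) ≤
      s * (b ^ 2 - a ^ 2 / (1 - s ^ 2) ^ 2) :=
    mul_le_mul_of_nonneg_left (by linarith) h0.le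
  refine le_trans ?_ h3
  have e : s * (b ^ 2 - a ^ 2 / (4 * s ^ 2 * (log s) ^ 2)) -
      (2 * a * b * (2 * log s) - a ^ 2 * (2 * s⁻¹)) / (2 * log s) ^ 2
      = s * (b - a / (2 * s * log s)) ^ 2 := by
    field_simp
    ring
  have : 0 ≤ s * (b - a / (2 * s * log s)) ^ 2 := by positivity
  linarith

/-- One-dimensional Hardy inequality with a free left end. -/
lemma hardy_interval {v : ℝ → ℝ} (hv : ContDiff ℝ 1 v) {r R : ℝ} (h0 : 0 < r) (hrR : r ≤ R)
    (hR : R < 1) (hvR : v R = 0) :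
    0 ≤ ∫ s in r..R, s * ((deriv v s) ^ 2 - v s ^ 2 / (1 - s ^ 2) ^ 2) := by
  have hd : Continuous (deriv v) := hv.continuous_deriv le_rfl
  have hc := hv.continuous
  have pos : ∀ s ∈ Set.uIcc r R, 0 < s ∧ s < 1 := by
    intro s hs
    rw [Set.uIcc_of_le hrR] at hs
    exact ⟨h0.trans_le hs.1, hs.2.trans_lt hR⟩
  have hlogc : ContinuousOn log (Set.uIcc r R) :=
    Real.continuousOn_log.mono (fun s hs => (pos s hs).1.ne')
  have hinvc : ContinuousOn (fun s : ℝ => s⁻¹) (Set.uIcc r R) :=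
    continuousOn_id.inv₀ (fun s hs => (pos s hs).1.ne')
  have hderiv : ∀ s ∈ Set.uIcc r R, HasDerivAt (fun s => v s ^ 2 / (2 * log s))
      ((2 * v s * deriv v s * (2 * log s) - v s ^ 2 * (2 * s⁻¹)) / (2 * log s) ^ 2) s := by
    intro s hs
    obtain ⟨p, q⟩ := pos s hs
    have h1 : HasDerivAt v (deriv v s) s := (hv.differentiable one_ne_zero s).hasDerivAt
    have h2 := (Real.hasDerivAt_log p.ne').const_mul 2
    have hl : 2 * log s ≠ 0 := mul_ne_zero two_ne_zero (Real.log_neg p q).ne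
    exact ((h1.pow 2).div h2 hl).congr_deriv (by simp)
  have i1 : IntervalIntegrable (fun s => (2 * v s * deriv v s * (2 * log s)
      - v s ^ 2 * (2 * s⁻¹)) / (2 * log s) ^ 2) volume r R := by
    apply ContinuousOn.intervalIntegrable
    refine ContinuousOn.div (by fun_prop) (by fun_prop) ?_
    intro s hs
    obtain ⟨p, q⟩ := pos s hs
    exact pow_ne_zero _ (mul_ne_zero two_ne_zero (Real.log_neg p q).ne)
  have i2 : IntervalIntegrable
      (fun s => s * ((deriv v s) ^ 2 - v s ^ 2 / (1 - s ^ 2) ^ 2)) volume r R := by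
    apply ContinuousOn.intervalIntegrable
    refine continuousOn_id.mul (ContinuousOn.sub (by fun_prop)
      (ContinuousOn.div (by fun_prop) (by fun_prop) ?_))
    intro s hs
    obtain ⟨p, q⟩ := pos s hs
    have : 0 < 1 - s ^ 2 := by nlinarith
    positivity
  have hm := intervalIntegral.integral_mono_on hrR i1 i2 (fun s hs => by
    obtain ⟨p, q⟩ := pos s (by rwa [Set.uIcc_of_le hrR])
    exact hardy_pointwise p q (v s) (deriv v s))
  rw [intervalIntegral.integral_eq_sub_of_hasDerivAt hderiv i1, hvR] at hm
  refine le_trans ?_ hm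
  have : v r ^ 2 / (2 * log r) ≤ 0 :=
    div_nonpos_of_nonneg_of_nonpos (sq_nonneg _)
      (by have := Real.log_neg h0 (hrR.trans_lt hR); linarith)
  simp only [ne_eq, OfNat.ofNat_ne_zero, not_false_eq_true, zero_pow, zero_div, zero_sub]
  linarith

lemma norm_pt (s : ℝ) : ‖pt s‖ = |s| := by
  simp [pt]

lemma contDiff_profile {u : E2 → ℝ} (hu : IsTest u) : ContDiff ℝ 1 (fun s => u (pt s)) := by
  have h : ContDiff ℝ 1 u := hu.1.of_le (by exact_mod_cast le_top)
  have e : pt = fun s : ℝ => s • pt 1 := by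
    funext s
    ext i
    simp [pt]
  have hp : ContDiff ℝ 1 pt := by
    rw [e]
    fun_prop
  exact h.comp hp

lemma radial_eq {u : E2 → ℝ} (hu : IsSigma u) {x y : E2} (h : ‖x‖ = ‖y‖) : u x = u y :=
  le_antisymm (hu.2 y x h.ge) (hu.2 x y h.le)

/-- The radial derivative is a directional derivative, hence dominated by the gradient. -/
lemma deriv_profile_le {u : E2 → ℝ} (hu : IsSigma u) {x : E2} (hx : 0 < ‖x‖) :
    (deriv (fun s => u (pt s)) ‖x‖) ^ 2 ≤ ‖gradient u x‖ ^ 2 := by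
  set e : E2 := ‖x‖⁻¹ • x with he
  have hen : ‖e‖ = 1 := by
    rw [he, norm_smul, norm_inv, norm_norm, inv_mul_cancel₀ hx.ne']
  have hex : ‖x‖ • e = x := by
    rw [he, smul_smul, mul_inv_cancel₀ hx.ne', one_smul]
  have hfun : (fun s => u (pt s)) = fun s => u (s • e) := by
    funext s
    apply radial_eq hu
    rw [norm_pt, norm_smul, hen, mul_one, Real.norm_eq_abs]
  have hdu : DifferentiableAt ℝ u x := (hu.1.1.differentiable (by simp)) x
  have hg : HasFDerivAt u (fderiv ℝ u x) (‖x‖ • e) := by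
    rw [hex]
    exact hdu.hasFDerivAt
  have hline : HasDerivAt (fun s : ℝ => s • e) e ‖x‖ := by
    simpa using (hasDerivAt_id ‖x‖).smul_const e
  have hD : HasDerivAt (fun s => u (s • e)) (fderiv ℝ u x e) ‖x‖ :=
    hg.comp_hasDerivAt _ hline
  rw [hfun, hD.deriv, ← sq_abs]
  have hn : ‖gradient u x‖ = ‖fderiv ℝ u x‖ := by
    simp [gradient]
  rw [hn]
  have := (fderiv ℝ u x).le_opNorm e
  rw [hen, mul_one, Real.norm_eq_abs] at this
  gcongr

lemma exists_radius {u : E2 → ℝ} (hu : IsTest u) {r : ℝ} (h1 : r < 1) :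
    ∃ R, r ≤ R ∧ R < 1 ∧ ∀ x, R ≤ ‖x‖ → u x = 0 := by
  have hc : IsCompact (tsupport u) := hu.2.1
  rcases (tsupport u).eq_empty_or_nonempty with h | h
  · refine ⟨r, le_rfl, h1, fun x _ => image_eq_zero_of_notMem_tsupport (by simp [h])⟩
  · obtain ⟨y, hy, hmax⟩ := hc.exists_isMaxOn h continuous_norm.continuousOn
    have hy1 : ‖y‖ < 1 := by
      have := hu.2.2 hy
      simpa [B2] using this
    obtain ⟨R, hR, hR1⟩ := exists_between (max_lt h1 hy1)
    refine ⟨R, (le_max_left _ _).trans hR.le, hR1, fun x hx => ?_⟩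
    apply image_eq_zero_of_notMem_tsupport
    intro hxt
    have : ‖x‖ ≤ ‖y‖ := hmax hxt
    have := (le_max_right r ‖y‖).trans_lt hR
    linarith

lemma integrable_grad {u : E2 → ℝ} (hu : IsTest u) :
    Integrable (fun x => ‖gradient u x‖ ^ 2) := by
  have e : (fun x => ‖gradient u x‖ ^ 2) = fun x => ‖fderiv ℝ u x‖ ^ 2 := by
    funext x
    simp [gradient]
  rw [e]
  have hc : Continuous (fderiv ℝ u) := hu.1.continuous_fderiv (by simp)
  apply Continuous.integrable_of_hasCompactSupport (by fun_prop)
  exact (hu.2.1.fderiv ℝ).comp_left (g := fun L => ‖L‖ ^ 2) (by simp)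

/-- The Hardy potential is singular on the unit circle, but `u` vanishes near it. -/
lemma integrable_pot {u : E2 → ℝ} (hu : IsTest u) :
    Integrable (fun x => (u x) ^ 2 / (1 - ‖x‖ ^ 2) ^ 2) := by
  have huc : Continuous u := hu.1.continuous
  obtain ⟨R, h0R, hR1, hz⟩ := exists_radius hu (r := 0) one_pos
  have hc : ContinuousOn (fun x : E2 => (u x) ^ 2 / (1 - ‖x‖ ^ 2) ^ 2)
      (Metric.closedBall 0 R) := by
    refine ContinuousOn.div (by fun_prop) (by fun_prop) ?_
    intro x hx
    have hx' : ‖x‖ ≤ R := by simpa using hx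
    have : 0 < 1 - ‖x‖ ^ 2 := by nlinarith [norm_nonneg x]
    positivity
  have hi := hc.integrableOn_compact (μ := volume) (isCompact_closedBall 0 R)
  refine (integrableOn_iff_integrable_of_support_subset ?_).1 hi
  intro x hx
  by_contra hn
  have : R < ‖x‖ := by simpa using hn
  exact hx (by simp [hz x this.le])

/-- The integrand dominates the radial function `k(|x|)`, whose integral over the plane is a
positive multiple of the one in `hardy_interval`. Outside `r ≤ |x| ≤ R` only the nonnegative
gradient term survives. -/
lemma hardy_exterior {u : E2 → ℝ} (hu : IsSigma u) {r : ℝ} (h0 : 0 < r) (h1 : r < 1) :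
    0 ≤ HOn (B2 \ Metric.ball 0 r) u := by
  obtain ⟨R, hrR, hR1, hz⟩ := exists_radius hu.1 h1
  set v : ℝ → ℝ := fun s => u (pt s) with hvdef
  have hv : ContDiff ℝ 1 v := contDiff_profile hu.1
  have hvc := hv.continuous
  have hdc : Continuous (deriv v) := hv.continuous_deriv le_rfl
  have hux : ∀ x : E2, u x = v ‖x‖ := fun x => radial_eq hu (by rw [norm_pt, abs_norm])
  have hvR : v R = 0 := hz _ (by rw [norm_pt]; exact le_abs_self R)
  set k0 : ℝ → ℝ := fun s => (deriv v s) ^ 2 - v s ^ 2 / (1 - s ^ 2) ^ 2 with hk0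
  set k : ℝ → ℝ := (Set.Icc r R).indicator k0 with hk
  have hmeas : MeasurableSet (B2 \ Metric.ball (0 : E2) r) :=
    Metric.isOpen_ball.measurableSet.diff Metric.isOpen_ball.measurableSet
  have hk0c : ContinuousOn k0 (Set.Icc r R) := by
    refine ContinuousOn.sub (by fun_prop) (ContinuousOn.div (by fun_prop) (by fun_prop) ?_)
    intro s hs
    have : 0 < 1 - s ^ 2 := by nlinarith [hs.1, hs.2]
    positivity
  have hkint : Integrable (fun x : E2 => k ‖x‖) := by
    set K : Set E2 := norm ⁻¹' Set.Icc r R with hK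
    have hKc : IsClosed K := isClosed_Icc.preimage continuous_norm
    have hKcomp : IsCompact K := (isCompact_closedBall (0 : E2) R).of_isClosed_subset hKc
      (fun x hx => by simpa using hx.2)
    have e : (fun x : E2 => k ‖x‖) = K.indicator (fun x => k0 ‖x‖) := by
      funext x
      simp [hk, hK, Set.indicator]
    rw [e, integrable_indicator_iff hKc.measurableSet]
    exact (hk0c.comp continuous_norm.continuousOn (fun x hx => hx)).integrableOn_compact hKcomp
  have hG := integrable_grad hu.1
  have hP := integrable_pot hu.1
  unfold HOn
  rw [← integral_sub hG.integrableOn hP.integrableOn, ← integral_indicator hmeas]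
  have hle : ∫ x : E2, k ‖x‖ ≤ ∫ x, (B2 \ Metric.ball (0 : E2) r).indicator
      (fun x => ‖gradient u x‖ ^ 2 - (u x) ^ 2 / (1 - ‖x‖ ^ 2) ^ 2) x := by
    refine integral_mono hkint ((hG.sub hP).indicator hmeas) (fun x => ?_)
    by_cases hx : ‖x‖ ∈ Set.Icc r R
    · have hxA : x ∈ B2 \ Metric.ball (0 : E2) r := by
        simp only [B2, Set.mem_sdiff, mem_ball_zero_iff, not_lt]
        exact ⟨hx.2.trans_lt hR1, hx.1⟩
      have := deriv_profile_le hu (h0.trans_le hx.1)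
      simp only [hk, Set.indicator_of_mem hx, Set.indicator_of_mem hxA, hk0, hux x]
      linarith
    · simp only [hk, Set.indicator_of_notMem hx]
      by_cases hxA : x ∈ B2 \ Metric.ball (0 : E2) r
      · have hRx : R ≤ ‖x‖ := by
          have hr : r ≤ ‖x‖ := by simpa using hxA.2
          by_contra! hlt
          exact hx ⟨hr, hlt.le⟩
        simp only [Set.indicator_of_mem hxA, hz x hRx]
        simp
      · simp only [Set.indicator_of_notMem hxA, le_refl]
  refine le_trans ?_ hle
  rw [integral_fun_norm_addHaar volume k]
  have hI : ∫ y in Set.Ioi (0 : ℝ), y ^ (Module.finrank ℝ E2 - 1) • k y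
      = ∫ s in r..R, s * k0 s := by
    rw [intervalIntegral.integral_of_le hrR, ← integral_Icc_eq_integral_Ioc,
      ← integral_indicator measurableSet_Icc, ← integral_indicator measurableSet_Ioi]
    congr 1
    funext y
    by_cases hy : y ∈ Set.Icc r R
    · have : y ∈ Set.Ioi (0 : ℝ) := h0.trans_le hy.1
      simp [hk, hy, this, -Set.mem_Icc, -Set.mem_Ioi]
    · simp [hk, hy, Set.indicator, -Set.mem_Icc]
  rw [hI]
  have := hardy_interval hv h0 hrR hR1 hvR
  positivity

/-- For `u ∈ Σ` and `r ∈ (0, 1)` one has `H_{B \ B_r}(u) ≥ 0`; equivalently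
`H_{B_r}(u) ≤ H(u)`. -/
theorem exterior_hardy_nonneg :
    ∀ u : E2 → ℝ, IsSigma u → ∀ r : ℝ, 0 < r → r < 1 →
      0 ≤ HOn (B2 \ Metric.ball 0 r) u ∧ HOn (Metric.ball 0 r) u ≤ H u := by
  intro u hu r h0 h1
  have hA := hardy_exterior hu h0 h1
  refine ⟨hA, ?_⟩
  have hsub : Metric.ball (0 : E2) r ⊆ B2 := Metric.ball_subset_ball h1.le
  have hm : MeasurableSet (Metric.ball (0 : E2) r) := Metric.isOpen_ball.measurableSet
  have e1 := setIntegral_sdiff hm (integrable_grad hu.1).integrableOn hsub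
  have e2 := setIntegral_sdiff hm (integrable_pot hu.1).integrableOn hsub
  unfold H
  unfold HOn at hA ⊢
  rw [e1, e2] at hA
  linarith
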